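/- Let G = A *_C B be the free product of groups A and B amalgamated over a common subgroup C with [A : C] ≤ 2 and [B : C] ≤ 2. Then the palindromic width of G with respect to the generating set A ∪ B is at most 3: every element of G is a product of at most 3 palindromes. -/

import Mathlib

/-!
The subgroup `C` is normal in `G`, and `G / C` is generated by two elements of order at most two.
Choosing `a ∈ A` and `b ∈ B` representing the (at most one) nontrivial coset of `C` in each factor,
every element of `G` has the form `c · w` with `c ∈ C` and `w` an alternating word in `a` and `b`:
this set of elements contains `1` and is stable under left multiplication by `A` and by `B`
(`IsCAlt.factor_mul`). An alternating word of odd length is a palindrome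
(`isPalindrome_alt_odd`), so `c · w` is a product of two palindromes: `c` and `w` when `w` has odd
length, and `c · x` and `w'` when `w = x w'` has positive even length. This even gives the bound
two in place of three.
-/


/-- An element of `H` is a palindrome with respect to a (symmetric) generating set `S` if it can
be represented by a word `s₁ s₂ ⋯ sₙ` with all `sᵢ ∈ S` and `sᵢ = s_{n+1-i}`, i.e. by a word
in `S` that reads the same forwards and backwards. -/
def IsPalindrome {H : Type*} [Group H] (S : Set H) (g : H) : Prop :=
  ∃ w : List H, (∀ s ∈ w, s ∈ S) ∧ w.reverse = w ∧ w.prod = g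

/-- `g` is a product of at most `k` palindromes with respect to `S`.  The palindromic width of
`H` with respect to `S` is infinite iff for every `k` some element fails this. -/
def IsProdOfPalindromes {H : Type*} [Group H] (S : Set H) (k : ℕ) (g : H) : Prop :=
  ∃ ps : List H, ps.length ≤ k ∧ (∀ p ∈ ps, IsPalindrome S p) ∧ ps.prod = g

open Monoid

open scoped Classical

namespace PalAmalg

variable {A B C : Type*} [Group A] [Group B] [Group C]
variable (i : C →* A) (j : C →* B)

/-- The free product of `A` and `B` amalgamated over `C` (embedded in `A` via `i` and in `B`
via `j`): the quotient of the free product `A ∗ B` by the normal subgroup generated by the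
elements `i c * (j c)⁻¹`, `c ∈ C`. -/
abbrev Amalg : Type _ :=
  Coprod A B ⧸ Subgroup.normalClosure
    {x : Coprod A B | ∃ c : C, x = Coprod.inl (i c) * (Coprod.inr (j c))⁻¹}

/-- The canonical map of the factor `A` into the amalgam. -/
def ofA : A →* Amalg i j := (QuotientGroup.mk' _).comp Coprod.inl

/-- The canonical map of the factor `B` into the amalgam. -/
def ofB : B →* Amalg i j := (QuotientGroup.mk' _).comp Coprod.inr

/-- The image of the factor `A` in the amalgam. -/
def AG : Set (Amalg i j) := Set.range (ofA i j)

/-- The image of the factor `B` in the amalgam. -/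
def BG : Set (Amalg i j) := Set.range (ofB i j)

/-- The image of the amalgamated subgroup `C` in the amalgam. -/
def CG : Set (Amalg i j) := Set.range ((ofA i j).comp i)

/-- The double coset `C v C` in the amalgam. -/
def DCoset (v : Amalg i j) : Set (Amalg i j) :=
  {x | ∃ c1 ∈ CG i j, ∃ c2 ∈ CG i j, x = c1 * v * c2}

/-- A sequence `x₁, …, xₙ` of elements of the amalgam is reduced if every `xᵢ` lies in one of
the factors, successive `xᵢ, xᵢ₊₁` lie in different factors, no `xᵢ` lies in `C` when `n > 1`,
and `x₁ ≠ 1` when `n = 1`. -/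
def Reduced (l : List (Amalg i j)) : Prop :=
  (∀ x ∈ l, x ∈ AG i j ∪ BG i j) ∧
  List.Chain' (fun x y => ¬(x ∈ AG i j ∧ y ∈ AG i j) ∧ ¬(x ∈ BG i j ∧ y ∈ BG i j)) l ∧
  (1 < l.length → ∀ x ∈ l, x ∉ CG i j) ∧
  (l.length = 1 → ∀ x ∈ l, x ≠ 1)

/-- `g` is a group-palindrome if it has a reduced expression `x₁ ⋯ xₙ` whose reverse
`xₙ ⋯ x₁` represents the same element of the amalgam. -/
def GroupPalindrome (g : Amalg i j) : Prop :=
  ∃ l : List (Amalg i j), Reduced i j l ∧ l.prod = g ∧ l.reverse.prod = g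

/-- A special sequence (with respect to a fixed `a ∈ A`): an alternating sequence of elements
of the factors in which every syllable lying in the double coset `C a C` is the letter `a`
itself, and every syllable lying in `C a⁻¹ C` is the letter `a⁻¹` itself. -/
def IsSpecialSeq (a : A) (l : List (Amalg i j)) : Prop :=
  (∀ x ∈ l, x ∈ AG i j ∪ BG i j) ∧
  List.Chain' (fun x y => ¬(x ∈ AG i j ∧ y ∈ AG i j) ∧ ¬(x ∈ BG i j ∧ y ∈ BG i j)) l ∧
  (1 < l.length → ∀ x ∈ l, x ∉ CG i j) ∧
  (∀ x ∈ l, x ∈ DCoset i j (ofA i j a) → x = ofA i j a) ∧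
  (∀ x ∈ l, x ∈ DCoset i j (ofA i j a)⁻¹ → x = (ofA i j a)⁻¹)

/-- `l` is a special form of `g`: up to boundary elements `u, u'` of `C` (which arise when the
first or last syllable is replaced by `a^{±1}`), the special sequence `l` represents `g`. -/
def IsSpecialForm (a : A) (g : Amalg i j) (l : List (Amalg i j)) : Prop :=
  IsSpecialSeq i j a l ∧ ∃ u ∈ CG i j, ∃ u' ∈ CG i j, u * l.prod * u' = g

/-- A chosen special form of `g`. -/
noncomputable def spform (a : A) (g : Amalg i j) : List (Amalg i j) :=
  if h : ∃ l : List (Amalg i j), IsSpecialForm i j a g l then Classical.choose h else []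

/-- The number of `v`-segments of length `2k-1` in the list `l`: subwords
`v x₁ ⋯ x_{2k-1} v` with no `x_t = v`. -/
noncomputable def segCount (v : Amalg i j) (k : ℕ) (l : List (Amalg i j)) : ℕ :=
  ((Finset.range (l.length + 1)).filter fun s => ∃ l₁ m l₂ : List (Amalg i j),
    l = l₁ ++ [v] ++ m ++ [v] ++ l₂ ∧ l₁.length = s ∧ m.length = 2 * k - 1 ∧ v ∉ m).card

/-- `p_k(g)`: the number of `a`-segments of length `2k-1` in the special form of `g`. -/
noncomputable def pk (a : A) (k : ℕ) (g : Amalg i j) : ℕ :=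
  segCount i j (ofA i j a) k (spform i j a g)

/-- `m_k(g)`: the number of `a⁻¹`-segments of length `2k-1` in the special form of `g`. -/
noncomputable def mk (a : A) (k : ℕ) (g : Amalg i j) : ℕ :=
  segCount i j (ofA i j a)⁻¹ k (spform i j a g)

/-- `d_k = p_k - m_k`. -/
noncomputable def dk (a : A) (k : ℕ) (g : Amalg i j) : ℤ :=
  (pk i j a k g : ℤ) - (mk i j a k g : ℤ)

/-- `r_k ∈ {0,1}`: the remainder of `d_k` modulo 2. -/
noncomputable def rk (a : A) (k : ℕ) (g : Amalg i j) : ℤ := dk i j a k g % 2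

/-- The quasi-homomorphism `Δ(g) = Σ_{k ≥ 1} r_k(g)` (a finite sum, since `r_k = 0` for `k`
larger than the length of the special form). -/
noncomputable def Delta (a : A) (g : Amalg i j) : ℝ :=
  ∑ k ∈ Finset.Icc 1 (spform i j a g).length, (rk i j a k g : ℝ)

/-! ### Alternating words -/

section AltWords

variable {G : Type*} [Group G]

/-- The alternating product `x * y * x * ⋯` with `n` factors, starting with `x`. -/
def alt (x y : G) : ℕ → G
  | 0 => 1
  | n + 1 => x * alt y x n

lemma alt_succ (x y : G) (n : ℕ) : alt x y (n + 1) = x * alt y x n := by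
  rw [alt]

/-- An alternating word of even length starting with `x` ends with `y`. -/
lemma alt_even_succ (k : ℕ) : ∀ x y : G, alt x y (2 * k + 2) = alt x y (2 * k + 1) * y := by
  induction k with
  | zero => intro x y; simp [alt]
  | succ k ih =>
    intro x y
    rw [show 2 * (k + 1) + 2 = (2 * k + 2) + 1 + 1 by ring,
      show 2 * (k + 1) + 1 = (2 * k + 1) + 1 + 1 by ring]
    rw [alt_succ, alt_succ, ih, alt_succ x y (2 * k + 1 + 1), alt_succ y x (2 * k + 1)]
    simp only [mul_assoc]

lemma isPalindrome_of_mem {S : Set G} {x : G} (hx : x ∈ S) : IsPalindrome S x :=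
  ⟨[x], by simpa using hx, by simp, by simp⟩

lemma IsPalindrome.conj {S : Set G} {x p : G} (hx : x ∈ S) (hp : IsPalindrome S p) :
    IsPalindrome S (x * p * x) := by
  obtain ⟨w, hw, hrev, rfl⟩ := hp
  refine ⟨x :: (w ++ [x]), ?_, by simp [hrev], by simp [mul_assoc]⟩
  intro s hs
  simp only [List.mem_cons, List.mem_append, List.not_mem_nil, or_false] at hs
  rcases hs with rfl | hs | rfl
  exacts [hx, hw s hs, hx]

lemma isPalindrome_alt_odd {S : Set G} (k : ℕ) :
    ∀ {x y : G}, x ∈ S → y ∈ S → IsPalindrome S (alt x y (2 * k + 1)) := by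
  induction k with
  | zero => intro x y hx _; simpa [alt] using isPalindrome_of_mem hx
  | succ k ih =>
    intro x y hx hy
    rw [show 2 * (k + 1) + 1 = (2 * k + 2) + 1 by ring, alt_succ, alt_even_succ, ← mul_assoc]
    exact IsPalindrome.conj hx (ih hy hx)

/-- `g` is an element of the subgroup `K` times an alternating word in `a` and `b`. -/
def IsCAlt (K : Subgroup G) (a b g : G) : Prop :=
  ∃ c ∈ K, ∃ n : ℕ, g = c * alt a b n ∨ g = c * alt b a n

lemma IsCAlt.symm {K : Subgroup G} {a b g : G} (h : IsCAlt K a b g) : IsCAlt K b a g := by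
  obtain ⟨c, hc, n, h⟩ := h
  exact ⟨c, hc, n, h.symm⟩

/-- Left multiplication by an element of `K` or of `K a` preserves the form `c · w`, when `a`
normalizes `K` and `a²` lies in `K`. -/
lemma IsCAlt.factor_mul {K : Subgroup G} {a b g t : G} (hsq : a * a ∈ K)
    (hconj : ∀ c ∈ K, a * c * a⁻¹ ∈ K) (ht : t ∈ K ∨ t * a⁻¹ ∈ K) (h : IsCAlt K a b g) :
    IsCAlt K a b (t * g) := by
  have hleft : ∀ c ∈ K, ∀ {g}, IsCAlt K a b g → IsCAlt K a b (c * g) := by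
    rintro c hc g ⟨d, hd, n, rfl | rfl⟩
    · exact ⟨c * d, K.mul_mem hc hd, n, Or.inl (by group)⟩
    · exact ⟨c * d, K.mul_mem hc hd, n, Or.inr (by group)⟩
  have ha : IsCAlt K a b (a * g) := by
    obtain ⟨c, hc, n, rfl | rfl⟩ := h
    · cases n with
      | zero => exact ⟨a * c * a⁻¹, hconj c hc, 1, Or.inl (by simp [alt])⟩
      | succ n =>
        exact ⟨a * c * a⁻¹ * (a * a), K.mul_mem (hconj c hc) hsq, n,
          Or.inr (by rw [alt_succ]; group)⟩
    · exact ⟨a * c * a⁻¹, hconj c hc, n + 1, Or.inl (by rw [alt_succ]; group)⟩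
  rcases ht with ht | ht
  · exact hleft t ht h
  · simpa [mul_assoc] using hleft _ ht ha

lemma isProdOfPalindromes_mul_alt {S : Set G} {K : Subgroup G} {x y c : G}
    (hx : x ∈ S) (hy : y ∈ S) (hK : ∀ d ∈ K, d ∈ S) (hKx : ∀ d ∈ K, d * x ∈ S)
    (hc : c ∈ K) (n : ℕ) : IsProdOfPalindromes S 3 (c * alt x y n) := by
  obtain ⟨k, rfl | rfl⟩ := Nat.even_or_odd' n
  · cases k with
    | zero =>
      exact ⟨[c], by simp, by simpa using isPalindrome_of_mem (hK c hc), by simp [alt]⟩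
    | succ k =>
      refine ⟨[c * x, alt y x (2 * k + 1)], by simp, ?_, ?_⟩
      · simpa using ⟨isPalindrome_of_mem (hKx c hc), isPalindrome_alt_odd k hy hx⟩
      · rw [show 2 * (k + 1) = (2 * k + 1) + 1 by ring, alt_succ x y]
        simp [mul_assoc]
  · refine ⟨[c, alt x y (2 * k + 1)], by simp, ?_, by simp⟩
    simpa using ⟨isPalindrome_of_mem (hK c hc), isPalindrome_alt_odd k hx hy⟩

end AltWords

/-! ### Coset representatives and the amalgam -/

/-- A subgroup `H` of index at most two is normalized by some `a` with `a² ∈ H` whose coset,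
together with `H`, covers the group (`a = 1` if `H` is the whole group). -/
lemma exists_coset_rep {M : Type*} [Group M] (H : Subgroup M)
    (hH : Cardinal.mk (M ⧸ H) ≤ 2) :
    ∃ a : M, a * a ∈ H ∧ (∀ c ∈ H, a * c * a⁻¹ ∈ H) ∧ ∀ t, t ∈ H ∨ t * a⁻¹ ∈ H := by
  have hle : H.index ≤ 2 := by
    have h := Cardinal.toNat_le_toNat hH (Cardinal.natCast_lt_aleph0 (n := 2))
    simpa [Subgroup.index, Nat.card] using h
  have hne : H.index ≠ 0 := by
    have hfin : Finite (M ⧸ H) :=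
      Cardinal.lt_aleph0_iff_finite.1 (hH.trans_lt (Cardinal.natCast_lt_aleph0 (n := 2)))
    exact Subgroup.index_ne_zero_of_finite
  rcases (by omega : H.index = 1 ∨ H.index = 2) with h | h
  · rw [Subgroup.index_eq_one] at h
    subst h
    exact ⟨1, by simp⟩
  · have hn : H.Normal := Subgroup.normal_of_index_eq_two h
    have hex : ∃ a, a ∉ H := by
      by_contra! hall
      have : H = ⊤ := (Subgroup.eq_top_iff' H).2 hall
      rw [← Subgroup.index_eq_one] at this
      omega
    obtain ⟨a, ha⟩ := hex
    refine ⟨a, Subgroup.mul_self_mem_of_index_two h a, fun c hc => hn.conj_mem c hc a, ?_⟩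
    intro t
    rw [Subgroup.mul_mem_iff_of_index_two h, inv_mem_iff]
    tauto

lemma ofA_eq_ofB (c : C) : ofA i j (i c) = ofB i j (j c) := by
  have h : (QuotientGroup.mk (Coprod.inl (i c) * (Coprod.inr (j c))⁻¹) : Amalg i j) = 1 :=
    (QuotientGroup.eq_one_iff _).2 (Subgroup.subset_normalClosure ⟨c, rfl⟩)
  rw [QuotientGroup.mk_mul, QuotientGroup.mk_inv, mul_inv_eq_one] at h
  exact h

/-- **The index-two case.**  If `G = A *_C B` with `[A : C] ≤ 2` and `[B : C] ≤ 2`, then the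
palindromic width of `G` with respect to the generating set `A ∪ B` is at most `3`: every
element of `G` is a product of at most `3` palindromes. -/
theorem amalgam_palindromic_width_le_three
    (hi : Function.Injective i) (hj : Function.Injective j)
    (hA : Cardinal.mk (A ⧸ i.range) ≤ 2)
    (hB : Cardinal.mk (B ⧸ j.range) ≤ 2)
    (g : Amalg i j) :
    IsProdOfPalindromes (AG i j ∪ BG i j) 3 g := by
  obtain ⟨a, ha2, haC, haA⟩ := exists_coset_rep i.range hA
  obtain ⟨b, hb2, hbC, hbB⟩ := exists_coset_rep j.range hB
  set K : Subgroup (Amalg i j) := i.range.map (ofA i j) with hK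
  have hK' : K = j.range.map (ofB i j) := by
    rw [hK, MonoidHom.map_range, MonoidHom.map_range]
    congr 1
    ext c
    exact ofA_eq_ofB i j c
  have hAK : ∀ {x}, x ∈ i.range → ofA i j x ∈ K := fun hx => Subgroup.mem_map_of_mem _ hx
  have hBK : ∀ {x}, x ∈ j.range → ofB i j x ∈ K := fun hx => by
    rw [hK']; exact Subgroup.mem_map_of_mem _ hx
  have hAmul : ∀ t g, IsCAlt K (ofA i j a) (ofB i j b) g →
      IsCAlt K (ofA i j a) (ofB i j b) (ofA i j t * g) := by
    intro t g h
    refine h.factor_mul (by simpa using hAK ha2) ?_ ?_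
    · rintro _ ⟨c, hc, rfl⟩
      simpa using hAK (haC c hc)
    · exact (haA t).imp hAK fun h => by simpa using hAK h
  have hBmul : ∀ t g, IsCAlt K (ofA i j a) (ofB i j b) g →
      IsCAlt K (ofA i j a) (ofB i j b) (ofB i j t * g) := by
    intro t g h
    refine (h.symm.factor_mul (by simpa using hBK hb2) ?_ ?_).symm
    · rw [hK']
      rintro _ ⟨c, hc, rfl⟩
      simpa [hK'] using hBK (hbC c hc)
    · exact (hbB t).imp hBK fun h => by simpa using hBK h
  have hg : IsCAlt K (ofA i j a) (ofB i j b) g := by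
    induction g using QuotientGroup.induction_on with
    | H z =>
      induction z using Coprod.induction_on' with
      | one => exact ⟨1, K.one_mem, 0, Or.inl (by simp [alt])⟩
      | inl_mul m x ih => exact hAmul m _ ih
      | inr_mul m x ih => exact hBmul m _ ih
  have hKA : ∀ d ∈ K, ∀ x, d * ofA i j x ∈ AG i j ∪ BG i j := by
    rintro _ ⟨c, -, rfl⟩ x
    exact Or.inl ⟨c * x, map_mul _ _ _⟩
  have hKB : ∀ d ∈ K, ∀ x, d * ofB i j x ∈ AG i j ∪ BG i j := by
    rw [hK']
    rintro _ ⟨c, -, rfl⟩ x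
    exact Or.inr ⟨c * x, map_mul _ _ _⟩
  have hKS : ∀ d ∈ K, d ∈ AG i j ∪ BG i j := fun d hd => by simpa using hKA d hd 1
  have haS : ofA i j a ∈ AG i j ∪ BG i j := Or.inl ⟨a, rfl⟩
  have hbS : ofB i j b ∈ AG i j ∪ BG i j := Or.inr ⟨b, rfl⟩
  obtain ⟨c, hc, n, rfl | rfl⟩ := hg
  · exact isProdOfPalindromes_mul_alt haS hbS hKS (fun d hd => hKA d hd a) hc n
  · exact isProdOfPalindromes_mul_alt hbS haS hKS (fun d hd => hKB d hd b) hc n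

end PalAmalg
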